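/- Let N ≥ 1, p > 1, s ∈ (0,1] with 1/p < s < N/p, β > 0, α > -sp, p < q < p(N+α)/(N-sp), and α - β + (q-p)(1-N)/p < 0. Then the embedding of the space of radial functions W^{s,p}_{rad,β}(ℝ^N) (with norm ‖u‖_{p,β} + [u]_{s,p}) into L^q_α(ℝ^N) is compact: if u_n ⇀ 0 weakly in W^{s,p}_{rad,β}(ℝ^N), then ∫_{ℝ^N} |x|^α |u_n|^q dx → 0. -/

import Mathlib

open MeasureTheory Filter

/-- The Gagliardo seminorm `[u]_{s,p}` for `s ∈ (0,1)`, and `‖∇u‖_{L^p}` for `s = 1`. -/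
noncomputable def seminormSP (N : ℕ) (s p : ℝ) (u : EuclideanSpace ℝ (Fin N) → ℝ) : ℝ :=
  if s = 1 then (∫ x, ‖fderiv ℝ u x‖ ^ p) ^ (1 / p)
  else (∫ q : EuclideanSpace ℝ (Fin N) × EuclideanSpace ℝ (Fin N),
      |u q.1 - u q.2| ^ p / ‖q.1 - q.2‖ ^ ((N : ℝ) + s * p)) ^ (1 / p)

/-- Membership in the weighted radial space `W^{s,p}_{rad,β}(ℝ^N)`. -/
def MemWspBeta (N : ℕ) (s p β : ℝ) (u : EuclideanSpace ℝ (Fin N) → ℝ) : Prop :=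
  Measurable u ∧ (∀ x y : EuclideanSpace ℝ (Fin N), ‖x‖ = ‖y‖ → u x = u y) ∧
    Integrable (fun x : EuclideanSpace ℝ (Fin N) => ‖x‖ ^ β * |u x| ^ p) ∧
    (if s = 1 then Differentiable ℝ u ∧ Integrable (fun x => ‖fderiv ℝ u x‖ ^ p)
     else Integrable (fun q : EuclideanSpace ℝ (Fin N) × EuclideanSpace ℝ (Fin N) =>
        |u q.1 - u q.2| ^ p / ‖q.1 - q.2‖ ^ ((N : ℝ) + s * p)))



/-- Hölder on a finite measure space, in `lintegral` form. -/
lemma aux_holder {Ω : Type*} [MeasurableSpace Ω] (μ : Measure Ω) {p : ℝ} (hp : 1 < p)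
    (g : Ω → ENNReal) (hg : AEMeasurable g μ) :
    ∫⁻ x, g x ∂μ ≤ (∫⁻ x, g x ^ p ∂μ) ^ (1 / p) * (μ Set.univ) ^ (1 - 1 / p) := by
  have hpq : p.HolderConjugate (Real.conjExponent p) := Real.HolderConjugate.conjExponent hp
  have h := ENNReal.lintegral_mul_le_Lp_mul_Lq μ hpq hg (g := fun _ => 1) aemeasurable_const
  have hq : 1 / Real.conjExponent p = 1 - 1 / p := by
    have := hpq.inv_add_inv_eq_one
    rw [one_div, one_div]; linarith
  simpa [hq] using h

/-- Bounds on a radial profile. -/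
structure Prof (d : ℕ) (s p β A : ℝ) (f : ℝ → ℝ) : Prop where
  meas : Measurable f
  lp : ∫⁻ t in Set.Ioi (0:ℝ), ENNReal.ofReal (t ^ ((d:ℝ) + β) * |f t| ^ p) ≤ ENNReal.ofReal A
  en : ∀ a b : ℝ, 0 < a → a < b → b ≤ 4 * a →
    ∫⁻ r in Set.Ioc a b, ∫⁻ t in Set.Ioc a b, ENNReal.ofReal (|f r - f t| ^ p)
      ≤ ENNReal.ofReal (A * a ^ (-(d:ℝ)) * (b - a) ^ (1 + s * p))

/-- Oscillation bound. -/
noncomputable def kosc (d : ℕ) (s p A a δ : ℝ) : ℝ :=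
  A ^ (1 / p) * a ^ (-((d:ℝ) / p)) * δ ^ (s - 1 / p)

/-- Average over an interval. -/
noncomputable def avg (f : ℝ → ℝ) (a b : ℝ) : ℝ := (b - a)⁻¹ * ∫ t in Set.Ioc a b, f t

lemma lp_loc {d : ℕ} {s p β A : ℝ} {f : ℝ → ℝ} (hβ : 0 < β)
    (H : Prof d s p β A f) {a b : ℝ} (ha : 0 < a) :
    ∫⁻ t in Set.Ioc a b, ENNReal.ofReal (|f t| ^ p) ≤ ENNReal.ofReal (a ^ (-((d:ℝ) + β)) * A) := by
  have h1 : ∫⁻ t in Set.Ioc a b, ENNReal.ofReal (|f t| ^ p) ≤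
      ∫⁻ t in Set.Ioc a b, ENNReal.ofReal (a ^ (-((d:ℝ) + β))) *
        ENNReal.ofReal (t ^ ((d:ℝ) + β) * |f t| ^ p) := by
    refine setLIntegral_mono' measurableSet_Ioc fun t ht => ?_
    rw [← ENNReal.ofReal_mul (by positivity)]
    apply ENNReal.ofReal_le_ofReal
    have h0 : 0 ≤ |f t| ^ p := by positivity
    have h2 : a ^ ((d:ℝ) + β) ≤ t ^ ((d:ℝ) + β) :=
      Real.rpow_le_rpow ha.le ht.1.le (by positivity)
    have h3 : 1 ≤ a ^ (-((d:ℝ) + β)) * t ^ ((d:ℝ) + β) := by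
      calc 1 = a ^ (-((d:ℝ) + β)) * a ^ ((d:ℝ) + β) := by
            rw [← Real.rpow_add ha]; simp
        _ ≤ _ := by gcongr
    nlinarith
  refine h1.trans ?_
  rw [lintegral_const_mul' _ _ ENNReal.ofReal_ne_top, ENNReal.ofReal_mul (by positivity)]
  gcongr
  refine le_trans (lintegral_mono_set ?_) H.lp
  exact fun t ht => ha.trans ht.1

lemma ofReal_abs_rpow {p : ℝ} (hp : 1 < p) (x : ℝ) :
    ENNReal.ofReal |x| ^ p = ENNReal.ofReal (|x| ^ p) :=
  ENNReal.ofReal_rpow_of_nonneg (abs_nonneg _) (by linarith)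

lemma l1_loc {d : ℕ} {s p β A : ℝ} {f : ℝ → ℝ} (hp : 1 < p) (hβ : 0 < β) (hA : 0 ≤ A)
    (H : Prof d s p β A f) {a b : ℝ} (ha : 0 < a) (hab : a < b) :
    ∫⁻ t in Set.Ioc a b, ENNReal.ofReal |f t| ≤
      ENNReal.ofReal ((a ^ (-((d:ℝ) + β)) * A) ^ (1 / p) * (b - a) ^ (1 - 1 / p)) := by
  have hp' : 1 / p < 1 := by rw [div_lt_one (by linarith)]; exact hp
  refine (aux_holder _ hp _ (H.meas.abs.ennreal_ofReal.aemeasurable)).trans ?_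
  simp only [ofReal_abs_rpow hp]
  rw [ENNReal.ofReal_mul (by positivity),
    ← ENNReal.ofReal_rpow_of_nonneg (by positivity) (by positivity),
    ← ENNReal.ofReal_rpow_of_nonneg (by linarith) (by linarith)]
  gcongr
  · exact lp_loc hβ H ha
  · simp

lemma int_loc {d : ℕ} {s p β A : ℝ} {f : ℝ → ℝ} (hp : 1 < p) (hβ : 0 < β) (hA : 0 ≤ A)
    (H : Prof d s p β A f) {a b : ℝ} (ha : 0 < a) (hab : a < b) :
    IntegrableOn f (Set.Ioc a b) := by
  refine ⟨H.meas.aestronglyMeasurable, ?_⟩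
  rw [hasFiniteIntegral_iff_norm]
  exact (l1_loc hp hβ hA H ha hab).trans_lt ENNReal.ofReal_lt_top

lemma avg_crude {d : ℕ} {s p β A : ℝ} {f : ℝ → ℝ} (hp : 1 < p) (hβ : 0 < β) (hA : 0 ≤ A)
    (H : Prof d s p β A f) {a b : ℝ} (ha : 1 ≤ a) (hab : a + 1 ≤ b) :
    |avg f a b| ≤ A ^ (1 / p) * a ^ (-((d:ℝ) / p)) := by
  have ha0 : 0 < a := by linarith
  have hba : 0 < b - a := by linarith
  have h1 := l1_loc hp hβ hA H ha0 (by linarith : a < b)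
  have hi := int_loc hp hβ hA H ha0 (by linarith : a < b)
  have h2 : ∫ t in Set.Ioc a b, |f t| ≤ (a ^ (-((d:ℝ) + β)) * A) ^ (1 / p) * (b - a) ^ (1 - 1 / p) := by
    rw [integral_eq_lintegral_of_nonneg_ae (Eventually.of_forall fun _ => abs_nonneg _)
      H.meas.abs.aestronglyMeasurable]
    exact ENNReal.toReal_le_of_le_ofReal (by positivity) h1
  have h3 : |∫ t in Set.Ioc a b, f t| ≤ ∫ t in Set.Ioc a b, |f t| := abs_integral_le_integral_abs
  rw [avg, abs_mul, abs_of_pos (inv_pos.2 hba)]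
  calc (b-a)⁻¹ * |∫ t in Set.Ioc a b, f t| ≤ (b-a)⁻¹ * ((a ^ (-((d:ℝ) + β)) * A) ^ (1 / p) * (b - a) ^ (1 - 1 / p)) := by
        gcongr; exact h3.trans h2
    _ = (a ^ (-((d:ℝ) + β)) * A) ^ (1 / p) * (b - a) ^ (- (1 / p)) := by
        rw [sub_eq_add_neg 1, Real.rpow_add hba, Real.rpow_one]; field_simp
    _ ≤ (a ^ (-((d:ℝ) + β)) * A) ^ (1 / p) * 1 := by
        gcongr
        apply Real.rpow_le_one_of_one_le_of_nonpos (by linarith)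
        have : 0 < 1 / p := by positivity
        linarith
    _ ≤ (a ^ (-(d:ℝ)) * A) ^ (1 / p) := by
        rw [mul_one]
        gcongr
        linarith
    _ = _ := by
        rw [Real.mul_rpow (by positivity) hA, ← Real.rpow_mul ha0.le, mul_comm]
        congr 2; ring

lemma osc {d : ℕ} {s p β A : ℝ} {f : ℝ → ℝ} (hp : 1 < p) (hA : 0 ≤ A) (hs1 : 1 / p < s)
    (H : Prof d s p β A f) {a b : ℝ} (ha : 0 < a) (hab : a < b) (hb : b ≤ 4 * a) :
    ∫⁻ r in Set.Ioc a b, ∫⁻ t in Set.Ioc a b, ENNReal.ofReal |f r - f t| ≤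
      ENNReal.ofReal ((b - a) ^ 2 * kosc d s p A a (b - a)) := by
  have hp' : 1 / p < 1 := by rw [div_lt_one (by linarith)]; exact hp
  have hm := H.meas
  have hba : 0 < b - a := by linarith
  have hm2 : Measurable (fun z : ℝ × ℝ => f z.1 - f z.2) := by fun_prop
  set μ := (volume : Measure ℝ).restrict (Set.Ioc a b) with hμ
  have hu : (μ.prod μ) Set.univ = ENNReal.ofReal ((b - a) ^ 2) := by
    rw [← Set.univ_prod_univ, Measure.prod_prod]
    simp [hμ, sq, ENNReal.ofReal_mul hba.le]
  have h1 := aux_holder (μ.prod μ) hp (fun z : ℝ × ℝ => ENNReal.ofReal |f z.1 - f z.2|)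
    hm2.abs.ennreal_ofReal.aemeasurable
  simp only [ofReal_abs_rpow hp] at h1
  rw [lintegral_prod _ hm2.abs.ennreal_ofReal.aemeasurable,
    lintegral_prod _ ((hm2.abs.pow_const p).ennreal_ofReal.aemeasurable), hu] at h1
  refine h1.trans ?_
  have h2 : (b - a) ^ 2 * kosc d s p A a (b - a) =
     (A * a ^ (-(d:ℝ)) * (b - a) ^ (1 + s * p)) ^ (1 / p) * ((b - a) ^ 2) ^ (1 - 1 / p) := by
    rw [kosc, Real.mul_rpow (by positivity) (by positivity), Real.mul_rpow hA (by positivity),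
      ← Real.rpow_mul ha.le, ← Real.rpow_mul hba.le, ← Real.rpow_natCast, ← Real.rpow_mul hba.le]
    have e1 : -(d:ℝ) * (1 / p) = -((d:ℝ)/p) := by ring
    have e2 : (b-a) ^ ((1 + s * p) * (1 / p)) * (b-a) ^ (((2:ℕ):ℝ) * (1 - 1 / p)) =
        (b-a) ^ ((2:ℕ):ℝ) * (b-a) ^ (s - 1 / p) := by
      rw [← Real.rpow_add hba, ← Real.rpow_add hba]
      congr 1
      have : p ≠ 0 := by linarith
      push_cast
      field_simp; ring
    rw [e1, mul_assoc _ (_ ^ ((1 + s * p) * (1 / p))), e2]; ring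
  rw [h2, ENNReal.ofReal_mul (by positivity),
    ← ENNReal.ofReal_rpow_of_nonneg (by positivity) (by positivity),
    ← ENNReal.ofReal_rpow_of_nonneg (by positivity) (by linarith)]
  gcongr
  exact H.en a b ha hab hb

lemma osc_avg {d : ℕ} {s p β A : ℝ} {f : ℝ → ℝ} (hp : 1 < p) (hβ : 0 < β) (hA : 0 ≤ A)
    (hs1 : 1 / p < s)
    (H : Prof d s p β A f) {a b : ℝ} (ha : 0 < a) (hab : a < b) (hb : b ≤ 4 * a) :
    ∫ r in Set.Ioc a b, |f r - avg f a b| ≤ (b - a) * kosc d s p A a (b - a) := by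
  have hba : 0 < b - a := by linarith
  have hi := int_loc hp hβ hA H ha hab
  have hk : 0 ≤ kosc d s p A a (b - a) := by unfold kosc; positivity
  rw [integral_eq_lintegral_of_nonneg_ae (Eventually.of_forall fun _ => abs_nonneg _)
      (by have := H.meas; fun_prop)]
  apply ENNReal.toReal_le_of_le_ofReal (by positivity)
  have h1 : ∀ r, ENNReal.ofReal |f r - avg f a b| ≤
      ENNReal.ofReal (b - a)⁻¹ * ∫⁻ t in Set.Ioc a b, ENNReal.ofReal |f r - f t| := by
    intro r
    have hi2 : IntegrableOn (fun t => f r - f t) (Set.Ioc a b) := by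
      refine Integrable.sub ?_ hi
      simp
    have e : f r - avg f a b = (b - a)⁻¹ * ∫ t in Set.Ioc a b, (f r - f t) := by
      rw [integral_sub (by simp) hi, avg]
      simp [hab.le]
      field_simp
    rw [e, abs_mul, abs_of_pos (inv_pos.2 hba), ENNReal.ofReal_mul (by positivity)]
    gcongr
    rw [← ofReal_integral_eq_lintegral_ofReal hi2.abs (Eventually.of_forall fun _ => abs_nonneg _)]
    exact ENNReal.ofReal_le_ofReal abs_integral_le_integral_abs
  refine (lintegral_mono h1).trans ?_
  rw [lintegral_const_mul' _ _ ENNReal.ofReal_ne_top]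
  have e : (b - a) * kosc d s p A a (b - a) = (b-a)⁻¹ * ((b - a) ^ 2 * kosc d s p A a (b - a)) := by
    field_simp
  rw [e, ENNReal.ofReal_mul (by positivity)]
  gcongr
  exact osc hp hA hs1 H ha hab hb

lemma osc_weight {d : ℕ} {s p β A : ℝ} {f : ℝ → ℝ} (hp : 1 < p) (hβ : 0 < β) (hA : 0 ≤ A)
    (hs1 : 1 / p < s)
    (H : Prof d s p β A f) {a b : ℝ} (ha : 0 < a) (hab : a < b) (hb : b ≤ 4 * a)
    {w : ℝ → ℝ} (hw : Measurable w) {K : ℝ} (hK : ∀ t ∈ Set.Ioc a b, |w t| ≤ K / (b - a))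
    (hw1 : ∫ t in Set.Ioc a b, w t = 1) :
    |(∫ t in Set.Ioc a b, f t * w t) - avg f a b| ≤ K * kosc d s p A a (b - a) := by
  have hba : 0 < b - a := by linarith
  have hi := int_loc hp hβ hA H ha hab
  have hbd : ∀ᵐ t ∂(volume.restrict (Set.Ioc a b)), ‖w t‖ ≤ K / (b - a) :=
    (ae_restrict_iff' measurableSet_Ioc).2 (Eventually.of_forall hK)
  have hiw : IntegrableOn w (Set.Ioc a b) := by
    by_contra h
    rw [integral_undef h] at hw1
    simp at hw1
  have hfw : IntegrableOn (fun t => f t * w t) (Set.Ioc a b) :=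
    hi.mul_bdd (c := K / (b - a)) hw.aestronglyMeasurable hbd
  have hid : IntegrableOn (fun t => f t - avg f a b) (Set.Ioc a b) := hi.sub (by simp)
  have e : (∫ t in Set.Ioc a b, f t * w t) - avg f a b =
      ∫ t in Set.Ioc a b, (f t - avg f a b) * w t := by
    have : ∀ t, (f t - avg f a b) * w t = f t * w t - avg f a b * w t := fun t => by ring
    simp only [this]
    rw [integral_sub hfw (hiw.const_mul _), integral_const_mul, hw1, mul_one]
  rw [e]
  calc |∫ t in Set.Ioc a b, (f t - avg f a b) * w t|
      ≤ ∫ t in Set.Ioc a b, |(f t - avg f a b) * w t| := abs_integral_le_integral_abs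
    _ ≤ ∫ t in Set.Ioc a b, |f t - avg f a b| * (K / (b - a)) := by
        refine setIntegral_mono_on ?_ (hid.abs.mul_const _) measurableSet_Ioc fun t ht => ?_
        · exact (hid.mul_bdd (c := K / (b - a)) hw.aestronglyMeasurable hbd).abs
        · rw [abs_mul]; gcongr; exact hK t ht
    _ = (∫ t in Set.Ioc a b, |f t - avg f a b|) * (K / (b - a)) := integral_mul_const _ _
    _ ≤ ((b - a) * kosc d s p A a (b - a)) * (K / (b - a)) := by
        have : 0 ≤ K / (b - a) := (abs_nonneg _).trans (hK b ⟨hab, le_rfl⟩)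
        gcongr
        exact osc_avg hp hβ hA hs1 H ha hab hb
    _ = _ := by field_simp

/-- Comparing averages on a subinterval. -/
lemma avg_sub {d : ℕ} {s p β A : ℝ} {f : ℝ → ℝ} (hp : 1 < p) (hβ : 0 < β) (hA : 0 ≤ A)
    (hs1 : 1 / p < s)
    (H : Prof d s p β A f) {a b a' b' : ℝ} (ha : 0 < a) (hab : a < b) (hb : b ≤ 4 * a)
    (h1 : a ≤ a') (h2 : a' < b') (h3 : b' ≤ b) :
    |avg f a' b' - avg f a b| ≤ (b - a) / (b' - a') * kosc d s p A a (b - a) := by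
  have hba : 0 < b - a := by linarith
  have hba' : 0 < b' - a' := by linarith
  have hsub : Set.Ioc a' b' ⊆ Set.Ioc a b := Set.Ioc_subset_Ioc h1 h3
  have := osc_weight hp hβ hA hs1 H ha hab hb
    (w := (Set.Ioc a' b').indicator fun _ => (b' - a')⁻¹) (K := (b - a) / (b' - a'))
    (measurable_const.indicator measurableSet_Ioc) ?_ ?_
  · convert this using 3
    have : (fun t => f t * (Set.Ioc a' b').indicator (fun _ => (b' - a')⁻¹) t) =
      (Set.Ioc a' b').indicator (fun t => f t * (b' - a')⁻¹) := by
      ext t; by_cases h : t ∈ Set.Ioc a' b' <;> simp [h]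
    rw [this, setIntegral_indicator measurableSet_Ioc, Set.inter_eq_self_of_subset_right hsub,
      integral_mul_const, avg, mul_comm]
  · intro t ht
    by_cases h : t ∈ Set.Ioc a' b'
    · rw [Set.indicator_of_mem h, abs_of_pos (by positivity)]; apply le_of_eq; field_simp
    · rw [Set.indicator_of_notMem h]; simp; positivity
  · rw [setIntegral_indicator measurableSet_Ioc, Set.inter_eq_self_of_subset_right hsub]
    simp [h2.le]
    field_simp


lemma kosc_nonneg {d : ℕ} {s p A a δ : ℝ} (hA : 0 ≤ A) (ha : 0 < a) (hδ : 0 < δ) :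
    0 ≤ kosc d s p A a δ := by unfold kosc; positivity

lemma ae_lebesgue {d : ℕ} {s p β A : ℝ} {f : ℝ → ℝ} (hp : 1 < p) (hβ : 0 < β) (hA : 0 ≤ A)
    (H : Prof d s p β A f) :
    ∀ᵐ r : ℝ, 0 < r → HasDerivAt (fun y => ∫ t in r..y, f t) (f r) r := by
  have h : ∀ n : ℕ, ∀ᵐ r : ℝ, r ∈ Set.uIcc (1 / ((n:ℝ) + 1)) ((n:ℝ) + 2) →
      ∀ c ∈ Set.uIcc (1 / ((n:ℝ) + 1)) ((n:ℝ) + 2), HasDerivAt (fun y => ∫ t in c..y, f t) (f r) r := by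
    intro n
    have h1 : 1 / ((n:ℝ) + 1) < (n:ℝ) + 2 := by
      rw [div_lt_iff₀ (by positivity)]
      have : (0:ℝ) ≤ n := by positivity
      nlinarith
    apply IntervalIntegrable.ae_hasDerivAt_integral
    rw [intervalIntegrable_iff_integrableOn_Ioc_of_le h1.le]
    exact int_loc hp hβ hA H (by positivity) h1
  rw [← ae_all_iff] at h
  filter_upwards [h] with r hr h0
  obtain ⟨n, hn⟩ := exists_nat_gt (max r (1 / r))
  have h1 : r < n := (le_max_left _ _).trans_lt hn
  have h2 : 1 / r < n := (le_max_right _ _).trans_lt hn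
  have h3 : r ∈ Set.uIcc (1 / ((n:ℝ) + 1)) ((n:ℝ) + 2) := by
    apply Set.Icc_subset_uIcc
    constructor
    · rw [div_le_iff₀ (by positivity)]
      rw [div_lt_iff₀ h0] at h2
      nlinarith
    · linarith
  exact hr n h3 r h3

lemma point_avg {d : ℕ} {s p β A : ℝ} {f : ℝ → ℝ} (hp : 1 < p) (hβ : 0 < β) (hA : 0 ≤ A)
    (hs1 : 1 / p < s) (H : Prof d s p β A f) {r δ : ℝ} (hr : 0 < r) (hδ : 0 < δ) (hδr : δ ≤ r)
    (hd : HasDerivAt (fun y => ∫ t in r..y, f t) (f r) r) :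
    |avg f r (r + δ) - f r| ≤ 2 / (1 - (1 / 2) ^ (s - 1 / p)) * kosc d s p A r δ := by
  have hσ : 0 < s - 1 / p := by linarith
  have hθ1 : ((1:ℝ) / 2) ^ (s - 1 / p) < 1 := Real.rpow_lt_one (by norm_num) (by norm_num) hσ
  have hlim : Tendsto (fun k : ℕ => avg f r (r + δ * (1 / 2) ^ k)) atTop (nhds (f r)) := by
    have h1 := hasDerivAt_iff_tendsto_slope_zero.1 hd
    have h2 : Tendsto (fun k : ℕ => δ * (1 / 2 : ℝ) ^ k) atTop (nhdsWithin 0 {0}ᶜ) := by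
      rw [tendsto_nhdsWithin_iff]
      constructor
      · have := (tendsto_pow_atTop_nhds_zero_of_lt_one (r := (1/2:ℝ)) (by norm_num) (by norm_num)).const_mul δ
        simpa using this
      · exact Eventually.of_forall fun k => by
          have : δ * (1 / 2 : ℝ) ^ k > 0 := by positivity
          exact this.ne'
    have h3 := h1.comp h2
    refine h3.congr fun k => ?_
    have : 0 < δ * (1 / 2 : ℝ) ^ k := by positivity
    simp only [Function.comp, avg, intervalIntegral.integral_same, sub_zero, smul_eq_mul]
    rw [intervalIntegral.integral_of_le (by linarith)]
    congr 2; ring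
  have key := dist_le_of_le_geometric_of_tendsto₀ (((1:ℝ) / 2) ^ (s - 1 / p))
    (2 * kosc d s p A r δ) hθ1 (f := fun k : ℕ => avg f r (r + δ * (1 / 2) ^ k)) ?_ hlim
  · rw [Real.dist_eq] at key
    simp only [pow_zero, mul_one] at key
    refine key.trans (le_of_eq ?_)
    ring
  · intro k
    have hk : 0 < δ * (1 / 2 : ℝ) ^ k := by positivity
    have hk1 : δ * (1 / 2 : ℝ) ^ k ≤ δ := by
      have : (1 / 2 : ℝ) ^ k ≤ 1 := pow_le_one₀ (by norm_num) (by norm_num)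
      nlinarith
    have hk2 : δ * (1 / 2 : ℝ) ^ (k+1) = δ * (1 / 2 : ℝ) ^ k / 2 := by rw [pow_succ]; ring
    have := avg_sub hp hβ hA hs1 H hr (b := r + δ * (1 / 2) ^ k) (a' := r)
      (b' := r + δ * (1 / 2) ^ (k+1)) (by linarith) (by linarith) le_rfl (by rw [hk2]; linarith)
      (by rw [hk2]; linarith)
    rw [dist_comm, Real.dist_eq]
    refine this.trans (le_of_eq ?_)
    rw [hk2]
    have e1 : (r + δ * (1 / 2) ^ k - r) / (r + δ * (1 / 2) ^ k / 2 - r) = 2 := by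
      rw [add_sub_cancel_left, add_sub_cancel_left]; field_simp
    rw [e1, add_sub_cancel_left, kosc, kosc, Real.mul_rpow hδ.le (by positivity),
      ← Real.rpow_natCast, ← Real.rpow_natCast, ← Real.rpow_mul (by norm_num),
      ← Real.rpow_mul (by norm_num), mul_comm (k:ℝ)]
    ring

/-- decay exponent at the origin -/
noncomputable def gam (d : ℕ) (s p : ℝ) : ℝ := (d:ℝ) / p - (s - 1 / p)

lemma kosc_gam {d : ℕ} {s p A r c : ℝ} (hr : 0 < r) (hc : 0 < c) :
    kosc d s p A r (c * r) = A ^ (1 / p) * c ^ (s - 1 / p) * r ^ (-gam d s p) := by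
  rw [kosc, gam, neg_sub, sub_eq_add_neg (s - 1 / p), Real.rpow_add hr, Real.mul_rpow hc.le hr.le]
  ring

/-- constant for averages -/
noncomputable def dconst (d : ℕ) (s p A : ℝ) : ℝ :=
  2 ^ gam d s p * A ^ (1 / p) +
    (9 / 2 * (A ^ (1 / p) * 3 ^ (s - 1 / p))) / (1 - 2 ^ (-gam d s p))

lemma avg_small {d : ℕ} {s p β A : ℝ} {f : ℝ → ℝ} (hp : 1 < p) (hβ : 0 < β) (hA : 0 ≤ A)
    (hs1 : 1 / p < s) (hg : 0 < gam d s p) (H : Prof d s p β A f) (k : ℕ) :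
    ∀ r : ℝ, (1 / 2) ^ k ≤ r → r ≤ 2 → |avg f r (2 * r)| ≤ dconst d s p A * r ^ (-gam d s p) := by
  set γ := gam d s p with hγ
  have h2 : (2:ℝ) ^ (-γ) < 1 := Real.rpow_lt_one_of_one_lt_of_neg (by norm_num) (by linarith)
  have hnum : 0 ≤ 9 / 2 * (A ^ (1 / p) * 3 ^ (s - 1 / p)) := by positivity
  induction k with
  | zero =>
    intro r hr1 hr2
    rw [pow_zero] at hr1
    have hr0 : 0 < r := by linarith
    have h := avg_crude hp hβ hA H hr1 (b := 2 * r) (by linarith)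
    have h4 : r ^ (-((d:ℝ)/p)) ≤ 1 := by
      apply Real.rpow_le_one_of_one_le_of_nonpos hr1
      have : 0 ≤ (d:ℝ) / p := by positivity
      linarith
    have h5 : (2:ℝ) ^ (-γ) ≤ r ^ (-γ) :=
      Real.rpow_le_rpow_of_nonpos hr0 hr2 (by linarith)
    have hA' : 0 ≤ A ^ (1 / p) := by positivity
    calc |avg f r (2 * r)| ≤ A ^ (1 / p) * 1 := h.trans (by gcongr)
      _ = (2 ^ γ * A ^ (1 / p)) * 2 ^ (-γ) := by
        rw [Real.rpow_neg (by norm_num)]; field_simp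
      _ ≤ dconst d s p A * r ^ (-γ) := by
        unfold dconst
        gcongr
        rw [le_add_iff_nonneg_right]
        exact div_nonneg hnum (by linarith)
  | succ k ih =>
    intro r hr1 hr2
    have hr0 : 0 < r := lt_of_lt_of_le (by positivity) hr1
    by_cases hr3 : (1 / 2) ^ k ≤ r
    · exact ih r hr3 hr2
    have hk1 : (1 / 2 : ℝ) ^ k ≤ 1 := pow_le_one₀ (by norm_num) (by norm_num)
    have h1 := ih (2 * r) (by rw [pow_succ] at hr1; linarith) (by linarith)
    have h3 := avg_sub hp hβ hA hs1 H hr0 (b := 4 * r) (a' := r) (b' := 2 * r)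
      (by linarith) le_rfl le_rfl (by linarith) (by linarith)
    have h4 := avg_sub hp hβ hA hs1 H hr0 (b := 4 * r) (a' := 2 * r) (b' := 2 * (2 * r))
      (by linarith) le_rfl (by linarith) (by linarith) (by linarith)
    have e0 : 4 * r - r = 3 * r := by ring
    have e1 : (4 * r - r) / (2 * r - r) = 3 := by field_simp; ring
    have e2 : (4 * r - r) / (2 * (2 * r) - 2 * r) = 3 / 2 := by field_simp; ring
    rw [e1, e0, kosc_gam hr0 (by norm_num)] at h3
    rw [e2, e0, kosc_gam hr0 (by norm_num)] at h4
    rw [← hγ] at h3 h4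
    have h5 : |avg f r (2 * r)| ≤ |avg f (2*r) (2*(2*r))| +
        9 / 2 * (A ^ (1 / p) * 3 ^ (s - 1 / p)) * r ^ (-γ) := by
      rw [abs_le] at h3 h4
      have := abs_le.1 (le_refl |avg f (2*r) (2*(2*r))|)
      rw [abs_le]
      constructor <;> nlinarith
    refine h5.trans ?_
    rw [Real.mul_rpow (by norm_num) hr0.le] at h1
    have hD : dconst d s p A * (1 - 2 ^ (-γ)) ≥ 9 / 2 * (A ^ (1 / p) * 3 ^ (s - 1 / p)) := by
      unfold dconst
      rw [← hγ, add_mul, div_mul_cancel₀ _ (by linarith)]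
      have : 0 ≤ 2 ^ γ * A ^ (1 / p) * (1 - 2 ^ (-γ)) := by
        apply mul_nonneg (by positivity); linarith
      linarith
    have hrg : 0 < r ^ (-γ) := by positivity
    nlinarith

/-- telescoping constant -/
noncomputable def cconst (s p : ℝ) : ℝ := 2 / (1 - (1 / 2) ^ (s - 1 / p))

lemma cconst_nonneg {s p : ℝ} (hs1 : 1 / p < s) : 0 ≤ cconst s p := by
  have hσ : 0 < s - 1 / p := by linarith
  have hθ1 : ((1:ℝ) / 2) ^ (s - 1 / p) < 1 := Real.rpow_lt_one (by norm_num) (by norm_num) hσ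
  unfold cconst
  apply div_nonneg (by norm_num); linarith

lemma point_small {d : ℕ} {s p β A : ℝ} {f : ℝ → ℝ} (hp : 1 < p) (hβ : 0 < β) (hA : 0 ≤ A)
    (hs1 : 1 / p < s) (hg : 0 < gam d s p) (H : Prof d s p β A f) {r : ℝ} (hr : 0 < r)
    (hr1 : r ≤ 1)
    (hd : HasDerivAt (fun y => ∫ t in r..y, f t) (f r) r) :
    |f r| ≤ (dconst d s p A + cconst s p * A ^ (1 / p)) * r ^ (-gam d s p) := by
  have h1 := point_avg hp hβ hA hs1 H hr hr le_rfl hd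
  obtain ⟨k, hk⟩ := exists_pow_lt_of_lt_one hr (by norm_num : (1/2:ℝ) < 1)
  have h2 := avg_small hp hβ hA hs1 hg H k r hk.le (by linarith)
  have h3 := kosc_gam (d := d) (s := s) (p := p) (A := A) hr one_pos
  rw [one_mul, Real.one_rpow, mul_one] at h3
  rw [h3, ← two_mul] at h1
  rw [abs_le] at h1 h2 ⊢
  unfold cconst
  constructor <;> nlinarith

lemma point_large {d : ℕ} {s p β A : ℝ} {f : ℝ → ℝ} (hp : 1 < p) (hβ : 0 < β) (hA : 0 ≤ A)
    (hs1 : 1 / p < s) (H : Prof d s p β A f) {r : ℝ} (hr : 1 ≤ r)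
    (hd : HasDerivAt (fun y => ∫ t in r..y, f t) (f r) r) :
    |f r| ≤ (1 + cconst s p) * A ^ (1 / p) * r ^ (-((d:ℝ) / p)) := by
  have h1 := point_avg hp hβ hA hs1 H (by linarith) one_pos hr hd
  have h2 := avg_crude hp hβ hA H hr (b := r + 1) (by linarith)
  rw [kosc, Real.one_rpow, mul_one] at h1
  rw [abs_le] at h1 h2 ⊢
  unfold cconst
  constructor <;> nlinarith

/-- bump weight on `(r, r+δ]` -/
noncomputable def bump (r δ t : ℝ) : ℝ := 6 / δ ^ 3 * max 0 ((t - r) * (r + δ - t))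

lemma bump_cont (r δ : ℝ) : Continuous (bump r δ) := by unfold bump; fun_prop

lemma bump_zero {r δ t : ℝ} (h : t ∉ Set.Ioc r (r + δ)) (hδ : 0 < δ) : bump r δ t = 0 := by
  unfold bump
  rw [max_eq_left, mul_zero]
  by_cases h1 : r < t
  · have : r + δ < t := by by_contra h2; exact h ⟨h1, not_lt.1 h2⟩
    nlinarith
  · nlinarith

lemma bump_bound {r δ t : ℝ} (hδ : 0 < δ) : |bump r δ t| ≤ 2 / (r + δ - r) := by
  have h1 : max 0 ((t - r) * (r + δ - t)) ≤ δ ^ 2 / 4 := by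
    apply max_le (by positivity)
    nlinarith [sq_nonneg (2 * t - 2 * r - δ)]
  have h0 : 0 ≤ max 0 ((t - r) * (r + δ - t)) := le_max_left _ _
  unfold bump
  rw [abs_of_nonneg (by positivity), add_sub_cancel_left]
  calc _ ≤ 6 / δ ^ 3 * (δ ^ 2 / 4) := by gcongr
    _ = (3 / 2) / δ := by field_simp; norm_num
    _ ≤ _ := by gcongr; norm_num

lemma bump_int {r δ : ℝ} (hδ : 0 < δ) : ∫ t in Set.Ioc r (r + δ), bump r δ t = 1 := by
  have : ∀ t ∈ Set.Ioc r (r + δ), bump r δ t = 6 / δ ^ 3 * ((t - r) * (r + δ - t)) := by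
    intro t ht
    unfold bump
    rw [max_eq_right]
    exact mul_nonneg (by linarith [ht.1]) (by linarith [ht.2])
  rw [setIntegral_congr_fun measurableSet_Ioc this, integral_const_mul,
    ← intervalIntegral.integral_of_le (by linarith)]
  have h2 : ∫ t in r..(r + δ), (t - r) * (r + δ - t) = δ ^ 3 / 6 := by
    have hd : ∀ t ∈ Set.uIcc r (r + δ), HasDerivAt (fun t : ℝ => δ * (t - r) ^ 2 / 2 - (t - r) ^ 3 / 3)
        ((t - r) * (r + δ - t)) t := by
      intro t _
      have h1 : HasDerivAt (fun t : ℝ => t - r) 1 t := (hasDerivAt_id t).sub_const r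
      have := (((h1.pow 2).const_mul δ).div_const 2).sub ((h1.pow 3).div_const 3)
      refine this.congr_deriv ?_
      simp; ring
    rw [intervalIntegral.integral_eq_sub_of_hasDerivAt hd (Continuous.intervalIntegrable (by fun_prop) _ _)]
    simp; ring
  rw [h2]; field_simp

lemma ptwise {d : ℕ} {s p β A : ℝ} {f : ℕ → ℝ → ℝ} (hp : 1 < p) (hβ : 0 < β) (hA : 0 ≤ A)
    (hs1 : 1 / p < s) (H : ∀ n, Prof d s p β A (f n)) {r : ℝ} (hr : 0 < r)
    (hd : ∀ n, HasDerivAt (fun y => ∫ t in r..y, f n t) (f n r) r)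
    (hw : ∀ δ, 0 < δ → Tendsto (fun n => ∫ t in Set.Ioc r (r + δ), f n t * bump r δ t) atTop (nhds 0)) :
    Tendsto (fun n => f n r) atTop (nhds 0) := by
  have hσ : 0 < s - 1 / p := by linarith
  have hlim : Tendsto (fun δ => (2 + cconst s p) * kosc d s p A r δ) (nhdsWithin 0 (Set.Ioi 0)) (nhds 0) := by
    have h1 : Tendsto (fun δ : ℝ => δ ^ (s - 1 / p)) (nhdsWithin 0 (Set.Ioi 0)) (nhds 0) := by
      have : ContinuousAt (fun δ : ℝ => δ ^ (s - 1 / p)) 0 :=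
        Real.continuousAt_rpow_const _ _ (Or.inr hσ.le)
      have h2 := this.tendsto
      simp only [Real.zero_rpow hσ.ne'] at h2
      exact h2.mono_left nhdsWithin_le_nhds
    have := (h1.const_mul (A ^ (1 / p) * r ^ (-((d:ℝ) / p)))).const_mul (2 + cconst s p)
    simpa [kosc] using this
  rw [Metric.tendsto_nhds]
  intro ε hε
  have hev : ∀ᶠ δ in nhdsWithin (0:ℝ) (Set.Ioi 0), 0 < δ ∧ δ ≤ r ∧
      (2 + cconst s p) * kosc d s p A r δ < ε / 2 := by
    filter_upwards [self_mem_nhdsWithin, Ioc_mem_nhdsGT hr, hlim.eventually_lt_const (half_pos hε)] with δ h1 h2 h3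
    exact ⟨h1, h2.2, h3⟩
  obtain ⟨δ, h1, h2, h3⟩ := hev.exists
  have h4 := hw δ h1
  rw [Metric.tendsto_nhds] at h4
  filter_upwards [h4 (ε / 2) (half_pos hε)] with n hn
  have h5 := point_avg hp hβ hA hs1 (H n) hr h1 h2 (hd n)
  have h6 := osc_weight hp hβ hA hs1 (H n) hr (by linarith : r < r + δ) (by linarith)
    (bump_cont r δ).measurable (K := 2) (fun t _ => bump_bound h1) (bump_int h1)
  rw [add_sub_cancel_left] at h6
  rw [Real.dist_eq, sub_zero] at hn ⊢
  rw [← cconst] at h5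
  rw [abs_le] at h5 h6
  rw [abs_lt] at hn ⊢
  constructor <;> linarith


lemma final1d {d : ℕ} {s p β A α q : ℝ} {f : ℕ → ℝ → ℝ} (hp : 1 < p) (hβ : 0 < β) (hA : 0 ≤ A)
    (hs1 : 1 / p < s) (hg : 0 < gam d s p) (hq : p < q)
    (he1 : -1 < (d:ℝ) + α - gam d s p * q) (he2 : α - β - (q - p) * ((d:ℝ) / p) < 0)
    (H : ∀ n, Prof d s p β A (f n))
    (hw : ∀ r δ, 0 < r → 0 < δ →
      Tendsto (fun n => ∫ t in Set.Ioc r (r + δ), f n t * bump r δ t) atTop (nhds 0)) :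
    Tendsto (fun n => ∫⁻ t in Set.Ioi (0:ℝ), ENNReal.ofReal (t ^ ((d:ℝ) + α) * |f n t| ^ q))
      atTop (nhds 0) := by
  have hLeb : ∀ᵐ r : ℝ, ∀ n, 0 < r → HasDerivAt (fun y => ∫ t in r..y, f n t) (f n r) r :=
    ae_all_iff.2 fun n => ae_lebesgue hp hβ hA (H n)
  set B := (1 + cconst s p) * A ^ (1 / p) with hB
  set S := dconst d s p A + cconst s p * A ^ (1 / p) with hS
  have hB0 : 0 ≤ B := by have := cconst_nonneg hs1; positivity
  have h2 : (2:ℝ) ^ (-gam d s p) < 1 := Real.rpow_lt_one_of_one_lt_of_neg (by norm_num) (by linarith)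
  have hS0 : 0 ≤ S := by
    have := cconst_nonneg hs1
    have : 0 ≤ dconst d s p A := by
      unfold dconst
      have : 0 ≤ (9 / 2 * (A ^ (1 / p) * 3 ^ (s - 1 / p))) / (1 - 2 ^ (-gam d s p)) :=
        div_nonneg (by positivity) (by linarith)
      positivity
    positivity
  have hp0 : 0 < p := by linarith
  have hq0 : 0 < q := by linarith
  set κ := -(α - β - (q - p) * ((d:ℝ) / p)) with hκ
  have hκ0 : 0 < κ := by linarith
  -- tail
  have htail : ∀ R : ℝ, 1 ≤ R → ∀ n, ∫⁻ t in Set.Ioi R, ENNReal.ofReal (t ^ ((d:ℝ) + α) * |f n t| ^ q)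
      ≤ ENNReal.ofReal (B ^ (q - p) * R ^ (-κ) * A) := by
    intro R hR n
    have h1 : ∫⁻ t in Set.Ioi R, ENNReal.ofReal (t ^ ((d:ℝ) + α) * |f n t| ^ q) ≤
        ∫⁻ t in Set.Ioi R, ENNReal.ofReal (B ^ (q - p) * R ^ (-κ)) *
          ENNReal.ofReal (t ^ ((d:ℝ) + β) * |f n t| ^ p) := by
      refine setLIntegral_mono_ae' measurableSet_Ioi ?_
      filter_upwards [hLeb] with t ht htR
      have htR : R < t := htR
      have ht0 : 0 < t := by linarith
      have hb := point_large hp hβ hA hs1 (H n) (by linarith : 1 ≤ t) (ht n ht0)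
      rw [← hB] at hb
      rw [← ENNReal.ofReal_mul (by positivity)]
      apply ENNReal.ofReal_le_ofReal
      have e1 : |f n t| ^ q = |f n t| ^ p * |f n t| ^ (q - p) := by
        rw [← Real.rpow_add_of_nonneg (abs_nonneg _) hp0.le (by linarith)]; congr 1; ring
      have e2 : t ^ ((d:ℝ) + α) = t ^ ((d:ℝ) + β) * t ^ (α - β) := by
        rw [← Real.rpow_add ht0]; congr 1; ring
      have h3 : |f n t| ^ (q - p) ≤ B ^ (q - p) * t ^ (-((d:ℝ) / p) * (q - p)) := by
        rw [Real.rpow_mul ht0.le, ← Real.mul_rpow hB0 (by positivity)]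
        exact Real.rpow_le_rpow (abs_nonneg _) hb (by linarith)
      have h4 : t ^ (α - β) * t ^ (-((d:ℝ) / p) * (q - p)) ≤ R ^ (-κ) := by
        rw [← Real.rpow_add ht0]
        have : α - β + -((d:ℝ) / p) * (q - p) = -κ := by rw [hκ]; ring
        rw [this]
        exact Real.rpow_le_rpow_of_nonpos (by linarith) htR.le (by linarith)
      rw [e1, e2]
      calc t ^ ((d:ℝ) + β) * t ^ (α - β) * (|f n t| ^ p * |f n t| ^ (q - p))
          ≤ t ^ ((d:ℝ) + β) * t ^ (α - β) * (|f n t| ^ p * (B ^ (q - p) * t ^ (-((d:ℝ) / p) * (q - p)))) := by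
            gcongr
        _ = (B ^ (q - p) * (t ^ (α - β) * t ^ (-((d:ℝ) / p) * (q - p)))) * (t ^ ((d:ℝ) + β) * |f n t| ^ p) := by ring
        _ ≤ _ := by gcongr
    refine h1.trans ?_
    rw [lintegral_const_mul' _ _ ENNReal.ofReal_ne_top,
      ENNReal.ofReal_mul (p := B ^ (q - p) * R ^ (-κ)) (by positivity)]
    gcongr
    refine le_trans (lintegral_mono_set ?_) (H n).lp
    exact Set.Ioi_subset_Ioi (by linarith)
  -- main part
  have hmain : ∀ R : ℝ, 1 ≤ R → Tendsto (fun n => ∫⁻ t in Set.Ioc 0 R,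
      ENNReal.ofReal (t ^ ((d:ℝ) + α) * |f n t| ^ q)) atTop (nhds 0) := by
    intro R hR
    have hz : ∫⁻ t in Set.Ioc (0:ℝ) R, (0 : ENNReal) = 0 := by simp
    rw [← hz]
    set G : ℝ → ℝ := fun t => S ^ q * t ^ ((d:ℝ) + α - gam d s p * q) + B ^ q * R ^ |(d:ℝ) + α| with hG
    have hGi : IntegrableOn G (Set.Ioc 0 R) := by
      apply Integrable.add
      · apply Integrable.const_mul
        have := intervalIntegral.intervalIntegrable_rpow' (a := 0) (b := R) he1
        rwa [intervalIntegrable_iff_integrableOn_Ioc_of_le (by linarith)] at this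
      · exact integrableOn_const (by simp)
    refine tendsto_lintegral_of_dominated_convergence (fun t => ENNReal.ofReal (G t)) ?_ ?_ ?_ ?_
    · intro n
      have := (H n).meas
      fun_prop
    · intro n
      rw [EventuallyLE, ae_restrict_iff' measurableSet_Ioc]
      filter_upwards [hLeb] with t ht htR
      have ht0 : 0 < t := htR.1
      apply ENNReal.ofReal_le_ofReal
      rcases le_total t 1 with h1 | h1
      · have hb := point_small hp hβ hA hs1 hg (H n) ht0 h1 (ht n ht0)
        rw [← hS] at hb
        have h3 : |f n t| ^ q ≤ S ^ q * t ^ (-gam d s p * q) := by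
          rw [Real.rpow_mul ht0.le, ← Real.mul_rpow hS0 (by positivity)]
          exact Real.rpow_le_rpow (abs_nonneg _) hb hq0.le
        calc t ^ ((d:ℝ) + α) * |f n t| ^ q ≤ t ^ ((d:ℝ) + α) * (S ^ q * t ^ (-gam d s p * q)) := by gcongr
          _ = S ^ q * t ^ ((d:ℝ) + α - gam d s p * q) := by
            rw [sub_eq_add_neg ((d:ℝ) + α), Real.rpow_add ht0 ((d:ℝ) + α), neg_mul]; ring
          _ ≤ _ := by rw [hG]; simp only [le_add_iff_nonneg_right]; positivity
      · have hb := point_large hp hβ hA hs1 (H n) h1 (ht n ht0)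
        rw [← hB] at hb
        have h4 : t ^ (-((d:ℝ)/p)) ≤ 1 := by
          apply Real.rpow_le_one_of_one_le_of_nonpos h1
          have : 0 ≤ (d:ℝ) / p := by positivity
          linarith
        have h3 : |f n t| ^ q ≤ B ^ q := by
          apply Real.rpow_le_rpow (abs_nonneg _) _ hq0.le
          refine hb.trans ?_
          nlinarith
        have h5 : t ^ ((d:ℝ) + α) ≤ R ^ |(d:ℝ) + α| :=
          (Real.rpow_le_rpow_of_exponent_le h1 (le_abs_self _)).trans
            (Real.rpow_le_rpow ht0.le htR.2 (abs_nonneg _))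
        calc t ^ ((d:ℝ) + α) * |f n t| ^ q ≤ R ^ |(d:ℝ) + α| * B ^ q := by gcongr
          _ ≤ _ := by
            rw [hG, mul_comm]; simp only [le_add_iff_nonneg_left]; positivity
    · exact hGi.lintegral_lt_top.ne
    · rw [ae_restrict_iff' measurableSet_Ioc]
      filter_upwards [hLeb] with t ht htR
      have ht0 : 0 < t := htR.1
      have h1 := ptwise hp hβ hA hs1 H ht0 (fun n => ht n ht0) (fun δ hδ => hw t δ ht0 hδ)
      have h2 : Tendsto (fun n => t ^ ((d:ℝ) + α) * |f n t| ^ q) atTop (nhds (t ^ ((d:ℝ) + α) * |0| ^ q)) :=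
        (h1.abs.rpow_const (Or.inr hq0.le)).const_mul _
      rw [abs_zero, Real.zero_rpow hq0.ne', mul_zero] at h2
      simpa using ENNReal.tendsto_ofReal h2
  rw [ENNReal.tendsto_nhds_zero]
  intro ε hε
  have hRlim : Tendsto (fun R : ℝ => ENNReal.ofReal (B ^ (q - p) * R ^ (-κ) * A)) atTop (nhds 0) := by
    have := ((tendsto_rpow_neg_atTop hκ0).const_mul (B ^ (q - p))).mul_const A
    simpa using ENNReal.tendsto_ofReal this
  have hε2 : 0 < ε / 2 := ENNReal.half_pos hε.ne'
  obtain ⟨R, hR1, hR2⟩ := ((hRlim.eventually_le_const hε2).and (eventually_ge_atTop 1)).exists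
  filter_upwards [(hmain R hR2).eventually_le_const hε2] with n hn
  rw [← Set.Ioc_union_Ioi_eq_Ioi (by linarith : (0:ℝ) ≤ R)]
  refine (lintegral_union_le _ _ _).trans ?_
  calc _ ≤ ε / 2 + ε / 2 := add_le_add hn ((htail R hR2 n).trans hR1)
    _ = ε := ENNReal.add_halves ε


section polar
open scoped Pointwise
variable {E : Type*} [NormedAddCommGroup E] [NormedSpace ℝ E] [MeasurableSpace E] [BorelSpace E]
  [FiniteDimensional ℝ E] [Nontrivial E] (μ : Measure E) [μ.IsAddHaarMeasure]

lemma polar (g : E → ENNReal) (hg : Measurable g) :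
    ∫⁻ x, g x ∂μ = ∫⁻ σ, ∫⁻ r in Set.Ioi (0:ℝ),
      ENNReal.ofReal (r ^ (Module.finrank ℝ E - 1)) * g (r • (σ : E)) ∂volume ∂μ.toSphere := by
  have hmp := μ.measurePreserving_homeomorphUnitSphereProd
  have h1 : ∫⁻ x, g x ∂μ = ∫⁻ x : ({(0:E)}ᶜ : Set E), g x ∂(μ.comap (↑)) := by
    rw [lintegral_subtype_comap (measurableSet_singleton _).compl, restrict_compl_singleton]
  have hgm : Measurable fun z : Metric.sphere (0:E) 1 × Set.Ioi (0:ℝ) => g ((z.2 : ℝ) • (z.1 : E)) := by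
    fun_prop
  have h2 : ∫⁻ x : ({(0:E)}ᶜ : Set E), g x ∂(μ.comap (↑)) =
      ∫⁻ z, g ((z.2 : ℝ) • (z.1 : E)) ∂(μ.toSphere.prod (.volumeIoiPow (Module.finrank ℝ E - 1))) := by
    rw [← hmp.lintegral_comp hgm]
    refine lintegral_congr fun x => ?_
    have : ‖(x:E)‖ ≠ 0 := norm_ne_zero_iff.2 x.2
    simp [homeomorphUnitSphereProd_apply_snd_coe, homeomorphUnitSphereProd_apply_fst_coe, smul_smul, this]
  rw [h1, h2, lintegral_prod _ hgm.aemeasurable]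
  refine lintegral_congr fun σ => ?_
  rw [Measure.volumeIoiPow, lintegral_withDensity_eq_lintegral_mul _ (by fun_prop) (by fun_prop)]
  exact lintegral_subtype_comap measurableSet_Ioi
    (fun r : ℝ => ENNReal.ofReal (r ^ (Module.finrank ℝ E - 1)) * g (r • (σ : E)))

lemma polar_radial (g : ℝ → ENNReal) (hg : Measurable g) :
    ∫⁻ x, g ‖x‖ ∂μ = μ.toSphere Set.univ * ∫⁻ r in Set.Ioi (0:ℝ),
      ENNReal.ofReal (r ^ (Module.finrank ℝ E - 1)) * g r := by
  rw [polar μ (fun x => g ‖x‖) (by fun_prop)]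
  have : ∀ σ : Metric.sphere (0:E) 1, (∫⁻ r in Set.Ioi (0:ℝ),
      ENNReal.ofReal (r ^ (Module.finrank ℝ E - 1)) * g ‖r • (σ : E)‖) =
      ∫⁻ r in Set.Ioi (0:ℝ), ENNReal.ofReal (r ^ (Module.finrank ℝ E - 1)) * g r := by
    intro σ
    refine setLIntegral_congr_fun measurableSet_Ioi fun r hr => ?_
    have hr : 0 < r := hr
    simp [norm_smul, abs_of_pos hr]
  simp only [this]
  rw [lintegral_const, mul_comm]

lemma ball_in_cone {x : E} (hx : ‖x‖ = 1) {ε t : ℝ} (hε : 0 < ε) (hε3 : ε ≤ 3) (ht : 1/2 ≤ t) (ht2 : t ≤ 3/4) :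
    Metric.ball (t • x) (ε / 16) ⊆ Set.image2 (· • ·) (Set.Ioo (0:ℝ) 1)
      (Metric.ball x ε ∩ Metric.sphere (0 : E) 1) := by
  intro y hy
  rw [mem_ball_iff_norm] at hy
  have hn : ‖t • x‖ = t := by rw [norm_smul, hx, Real.norm_of_nonneg (by linarith), mul_one]
  have h1 := abs_norm_sub_norm_le y (t • x)
  rw [hn] at h1
  have h2 := abs_le.1 h1
  have hy0 : 0 < ‖y‖ := by linarith [h2.1]
  refine ⟨‖y‖, ⟨hy0, by linarith [h2.2]⟩, ‖y‖⁻¹ • y, ⟨?_, ?_⟩, ?_⟩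
  · rw [mem_ball_iff_norm]
    have e : ‖y‖⁻¹ • y - x = ‖y‖⁻¹ • ((y - t • x) + (t - ‖y‖) • x) := by
      rw [sub_smul, sub_add_sub_cancel, smul_sub, smul_smul, inv_mul_cancel₀ hy0.ne', one_smul]
    have h3 : ‖(y - t • x) + (t - ‖y‖) • x‖ ≤ ε / 16 + ε / 16 := by
      refine (norm_add_le _ _).trans ?_
      rw [norm_smul, hx, mul_one, Real.norm_eq_abs, abs_sub_comm]
      linarith
    rw [e, norm_smul, norm_inv, norm_norm, inv_mul_lt_iff₀ hy0]
    nlinarith [h2.1]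
  · simp [norm_smul, hy0.ne']
  · simp [smul_smul, hy0.ne']

lemma cap (x : Metric.sphere (0:E) 1) {ε : ℝ} (hε : 0 < ε) (hε3 : ε ≤ 3) :
    ENNReal.ofReal ((ε / 16) ^ (Module.finrank ℝ E - 1) / 8) * μ (Metric.ball 0 1) ≤
      μ.toSphere (Metric.ball x ε) := by
  have hx : ‖(x:E)‖ = 1 := by simp
  set η := ε / 16 with hη
  have hη0 : 0 < η := by positivity
  set K := ⌊1 / (8 * η)⌋₊ + 1 with hK
  have hK1 : 1 / (8 * η) ≤ K := by rw [hK]; push_cast; exact (Nat.lt_floor_add_one _).le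
  have hd : 0 < Module.finrank ℝ E := Module.finrank_pos
  rw [μ.toSphere_apply' measurableSet_ball, Subtype.image_ball, Set.ofPred_mem_eq]
  have hsub : (⋃ j ∈ Finset.range K, Metric.ball ((1/2 + 2 * η * j : ℝ) • (x:E)) η) ⊆
      Set.Ioo (0:ℝ) 1 • (Metric.ball (x:E) ε ∩ Metric.sphere (0 : E) 1) := by
    refine Set.iUnion₂_subset fun j hj => ?_
    apply ball_in_cone hx hε hε3
    · have : 0 ≤ 2 * η * j := by positivity
      linarith
    · have h1 : j ≤ ⌊1 / (8 * η)⌋₊ := by rw [Finset.mem_range] at hj; omega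
      have h2 : (j:ℝ) ≤ 1 / (8 * η) :=
        (Nat.cast_le.2 h1).trans (Nat.floor_le (by positivity))
      rw [le_div_iff₀ (by positivity)] at h2
      linarith
  have hdisj : (↑(Finset.range K) : Set ℕ).PairwiseDisjoint
      (fun j : ℕ => Metric.ball ((1/2 + 2 * η * j : ℝ) • (x:E)) η) := by
    intro i _ j _ hij
    apply Metric.ball_disjoint_ball
    rw [dist_eq_norm, ← sub_smul, norm_smul, hx, mul_one, Real.norm_eq_abs]
    have e : (1/2 + 2 * η * i : ℝ) - (1/2 + 2 * η * j) = 2 * η * ((i:ℝ) - j) := by ring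
    rw [e, abs_mul, abs_of_pos (by positivity)]
    have : 1 ≤ |(i:ℝ) - j| := by
      have h1 : (1:ℤ) ≤ |(i:ℤ) - j| := Int.one_le_abs (by omega)
      exact_mod_cast h1
    nlinarith
  have hcone : (K : ENNReal) * (ENNReal.ofReal (η ^ Module.finrank ℝ E) * μ (Metric.ball 0 1)) ≤
      μ (Set.Ioo (0:ℝ) 1 • (Metric.ball (x:E) ε ∩ Metric.sphere (0 : E) 1)) := by
    refine le_trans (le_of_eq ?_) (measure_mono hsub)
    rw [measure_biUnion_finset hdisj fun _ _ => measurableSet_ball]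
    simp [μ.addHaar_ball_of_pos _ hη0]
  have hdim : (1:ENNReal) ≤ Module.finrank ℝ E := by exact_mod_cast hd
  calc _ ≤ (K : ENNReal) * (ENNReal.ofReal (η ^ Module.finrank ℝ E) * μ (Metric.ball 0 1)) := by
        rw [← mul_assoc]
        gcongr
        rw [← ENNReal.ofReal_natCast, ← ENNReal.ofReal_mul (by positivity)]
        apply ENNReal.ofReal_le_ofReal
        obtain ⟨m, hm⟩ : ∃ m, Module.finrank ℝ E = m + 1 := ⟨_, (Nat.sub_add_cancel hd).symm⟩
        rw [hm, Nat.add_sub_cancel, pow_succ]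
        rw [div_le_iff₀ (by positivity)] at hK1
        have : 0 < η ^ m := by positivity
        nlinarith
    _ ≤ 1 * μ (Set.Ioo (0:ℝ) 1 • (Metric.ball (x:E) ε ∩ Metric.sphere (0 : E) 1)) := by
        rw [one_mul]; exact hcone
    _ ≤ _ := by gcongr

lemma energy_frac {u : E → ℝ} {f : ℝ → ℝ} (hu : ∀ x, u x = f ‖x‖) (hf : Measurable f)
    {d : ℕ} (hd : Module.finrank ℝ E = d + 1) {s p T : ℝ} (hp : 1 < p) (hs : 0 < s)
    (hT : ∫⁻ z : E × E, ENNReal.ofReal (|u z.1 - u z.2| ^ p / ‖z.1 - z.2‖ ^ ((d:ℝ) + 1 + s * p)) ∂(μ.prod μ)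
      ≤ ENNReal.ofReal T) {a b : ℝ} (ha : 0 < a) (hab : a < b) (hb : b ≤ 4 * a) :
    ENNReal.ofReal (a ^ d * a ^ d * (5 * (b - a)) ^ (-((d:ℝ) + 1 + s * p)) * (((b - a) / a / 16) ^ d / 8)) *
      (μ.toSphere Set.univ * μ (Metric.ball 0 1)) *
      (∫⁻ r in Set.Ioc a b, ∫⁻ t in Set.Ioc a b, ENNReal.ofReal (|f r - f t| ^ p)) ≤ ENNReal.ofReal T := by
  set Λ := (5 * (b - a)) ^ (-((d:ℝ) + 1 + s * p)) with hΛ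
  have hba : 0 < b - a := by linarith
  have hΛ0 : 0 < Λ := by positivity
  have hum : Measurable u := by
    have : u = fun x => f ‖x‖ := funext hu
    rw [this]; fun_prop
  set I : E × E → ENNReal := fun z =>
    ENNReal.ofReal (|u z.1 - u z.2| ^ p / ‖z.1 - z.2‖ ^ ((d:ℝ) + 1 + s * p)) with hI
  have hIm : Measurable I := by rw [hI]; fun_prop
  set ε := (b - a) / a with hε
  have hε0 : 0 < ε := by positivity
  have hε3 : ε ≤ 3 := by rw [hε, div_le_iff₀ ha]; linarith
  set C := ENNReal.ofReal ((ε / 16) ^ d / 8) * μ (Metric.ball 0 1) with hC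
  refine le_trans ?_ hT
  rw [lintegral_prod _ hIm.aemeasurable, polar μ _ hIm.lintegral_prod_right']
  have key : ∀ σ : Metric.sphere (0:E) 1, ∀ r ∈ Set.Ioc a b,
      ENNReal.ofReal (a ^ d) * ENNReal.ofReal Λ * C *
        ∫⁻ t in Set.Ioc a b, ENNReal.ofReal (|f r - f t| ^ p) ≤ ∫⁻ y, I (r • (σ:E), y) ∂μ := by
    intro σ r hr
    have hIm2 : Measurable (fun y => I (r • (σ:E), y)) := hIm.comp (by fun_prop)
    rw [polar μ _ hIm2]
    have h1 : ∀ τ ∈ Metric.ball σ ε, ENNReal.ofReal (a ^ d) * ENNReal.ofReal Λ *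
        ∫⁻ t in Set.Ioc a b, ENNReal.ofReal (|f r - f t| ^ p) ≤
        ∫⁻ t in Set.Ioi (0:ℝ), ENNReal.ofReal (t ^ (Module.finrank ℝ E - 1)) * I (r • (σ:E), t • (τ:E)) := by
      intro τ hτ
      refine le_trans ?_ (lintegral_mono_set (s := Set.Ioc a b) fun t ht => ha.trans ht.1)
      rw [← lintegral_const_mul' _ _ (ENNReal.mul_ne_top ENNReal.ofReal_ne_top ENNReal.ofReal_ne_top)]
      refine setLIntegral_mono' measurableSet_Ioc fun t ht => ?_
      have ht0 : 0 < t := ha.trans ht.1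
      have hr0 : 0 < r := ha.trans hr.1
      rw [hd, Nat.add_sub_cancel, mul_assoc]
      gcongr
      · exact ht.1.le
      rw [← ENNReal.ofReal_mul hΛ0.le]
      apply ENNReal.ofReal_le_ofReal
      simp only [hu]
      have e1 : ‖r • (σ:E)‖ = r := by simp [norm_smul, abs_of_pos hr0]
      have e2 : ‖t • (τ:E)‖ = t := by simp [norm_smul, abs_of_pos ht0]
      rw [e1, e2]
      by_cases h0 : r • (σ:E) - t • (τ:E) = 0
      · have : r = t := by rw [← e1, ← e2, sub_eq_zero.1 h0]
        rw [this, sub_self, abs_zero, Real.zero_rpow (by linarith)]; simp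
      have hpos : 0 < ‖r • (σ:E) - t • (τ:E)‖ := norm_pos_iff.2 h0
      have hle : ‖r • (σ:E) - t • (τ:E)‖ ≤ 5 * (b - a) := by
        have e3 : r • (σ:E) - t • (τ:E) = (r - t) • (σ:E) - t • ((τ:E) - σ) := by
          rw [sub_smul, smul_sub]; abel
        rw [e3]
        refine (norm_sub_le _ _).trans ?_
        rw [norm_smul, norm_smul]
        have h5 : ‖(τ:E) - σ‖ < ε := by
          rw [Metric.mem_ball, Subtype.dist_eq, dist_eq_norm] at hτ; exact hτ
        have h6 : ‖(σ:E)‖ = 1 := by simp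
        have h7 : ‖r - t‖ ≤ b - a := by
          rw [Real.norm_eq_abs, abs_le]; constructor <;> linarith [hr.1, hr.2, ht.1, ht.2]
        have h8 : ‖t‖ * ‖(τ:E) - σ‖ ≤ (4 * a) * ε := by
          rw [Real.norm_of_nonneg ht0.le]
          gcongr
          exact ht.2.trans hb
        have h9 : 4 * a * ε = 4 * (b - a) := by rw [hε]; field_simp
        rw [h6, mul_one]
        linarith
      rw [div_eq_mul_inv, ← Real.rpow_neg hpos.le, mul_comm]
      gcongr
      rw [hΛ]
      apply Real.rpow_le_rpow_of_nonpos hpos hle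
      have : 0 < s * p := by positivity
      have : (0:ℝ) ≤ d := by positivity
      linarith
    have hcap := cap μ σ hε0 hε3
    rw [hd, Nat.add_sub_cancel, ← hC] at hcap
    calc _ ≤ ∫⁻ τ in Metric.ball σ ε, (ENNReal.ofReal (a ^ d) * ENNReal.ofReal Λ *
            ∫⁻ t in Set.Ioc a b, ENNReal.ofReal (|f r - f t| ^ p)) ∂μ.toSphere := by
          rw [setLIntegral_const]
          calc _ = (ENNReal.ofReal (a ^ d) * ENNReal.ofReal Λ *
            ∫⁻ t in Set.Ioc a b, ENNReal.ofReal (|f r - f t| ^ p)) * C := by ring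
            _ ≤ _ := by gcongr
      _ ≤ _ := setLIntegral_mono' measurableSet_ball h1
      _ ≤ _ := setLIntegral_le_lintegral _ _
  have h2 : ∀ σ : Metric.sphere (0:E) 1,
      ENNReal.ofReal (a ^ d) * (ENNReal.ofReal (a ^ d) * ENNReal.ofReal Λ * C) *
      (∫⁻ r in Set.Ioc a b, ∫⁻ t in Set.Ioc a b, ENNReal.ofReal (|f r - f t| ^ p)) ≤
      ∫⁻ r in Set.Ioi (0:ℝ), ENNReal.ofReal (r ^ (Module.finrank ℝ E - 1)) *
        ∫⁻ y, I (r • (σ:E), y) ∂μ := by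
    intro σ
    refine le_trans ?_ (lintegral_mono_set (s := Set.Ioc a b) fun t ht => ha.trans ht.1)
    have hCt : C ≠ ⊤ := ENNReal.mul_ne_top ENNReal.ofReal_ne_top measure_ball_lt_top.ne
    rw [← lintegral_const_mul' _ _ (by finiteness)]
    refine setLIntegral_mono' measurableSet_Ioc fun r hr => ?_
    rw [hd, Nat.add_sub_cancel, mul_assoc]
    gcongr
    · exact hr.1.le
    · exact key σ r hr
  calc _ = ∫⁻ σ : Metric.sphere (0:E) 1, ENNReal.ofReal (a ^ d) * (ENNReal.ofReal (a ^ d) * ENNReal.ofReal Λ * C) *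
      (∫⁻ r in Set.Ioc a b, ∫⁻ t in Set.Ioc a b, ENNReal.ofReal (|f r - f t| ^ p)) ∂μ.toSphere := by
        rw [lintegral_const, hC, ENNReal.ofReal_mul (by positivity), ENNReal.ofReal_mul (by positivity),
          ENNReal.ofReal_mul (by positivity)]
        ring
    _ ≤ _ := lintegral_mono h2

end polar

lemma energy_one {f : ℝ → ℝ} {d : ℕ} {p T : ℝ} (hp : 1 < p) (hT0 : 0 ≤ T)
    (hf : Differentiable ℝ f)
    (hT : ∫⁻ t in Set.Ioi (0:ℝ), ENNReal.ofReal (t ^ d) * ENNReal.ofReal (|deriv f t| ^ p) ≤ ENNReal.ofReal T)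
    {a b : ℝ} (ha : 0 < a) (hab : a < b) :
    (∫⁻ r in Set.Ioc a b, ∫⁻ t in Set.Ioc a b, ENNReal.ofReal (|f r - f t| ^ p)) ≤
      ENNReal.ofReal (T * a ^ (-(d:ℝ)) * (b - a) ^ (1 + p)) := by
  have hba : 0 < b - a := by linarith
  have hp' : 1 / p < 1 := by rw [div_lt_one (by linarith)]; exact hp
  have hm := measurable_deriv f
  have h1 : ∫⁻ t in Set.Ioc a b, ENNReal.ofReal (|deriv f t| ^ p) ≤ ENNReal.ofReal (a ^ (-(d:ℝ)) * T) := by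
    calc _ ≤ ∫⁻ t in Set.Ioc a b, ENNReal.ofReal (a ^ (-(d:ℝ))) *
          (ENNReal.ofReal (t ^ d) * ENNReal.ofReal (|deriv f t| ^ p)) := by
          refine setLIntegral_mono' measurableSet_Ioc fun t ht => ?_
          rw [← mul_assoc, ← ENNReal.ofReal_mul (by positivity)]
          have : (1:ENNReal) ≤ ENNReal.ofReal (a ^ (-(d:ℝ)) * t ^ d) := by
            rw [ENNReal.one_le_ofReal, Real.rpow_neg ha.le, Real.rpow_natCast, inv_mul_eq_div,
              le_div_iff₀ (by positivity), one_mul]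
            exact pow_le_pow_left₀ ha.le ht.1.le _
          exact le_mul_of_one_le_left' this
      _ ≤ _ := by
          rw [lintegral_const_mul' _ _ ENNReal.ofReal_ne_top, ENNReal.ofReal_mul (by positivity)]
          gcongr
          exact le_trans (lintegral_mono_set fun t ht => ha.trans ht.1) hT
  have h2 : ∫⁻ t in Set.Ioc a b, ENNReal.ofReal |deriv f t| ≤
      ENNReal.ofReal ((a ^ (-(d:ℝ)) * T) ^ (1 / p) * (b - a) ^ (1 - 1 / p)) := by
    refine (aux_holder _ hp _ (hm.abs.ennreal_ofReal.aemeasurable)).trans ?_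
    simp only [ofReal_abs_rpow hp]
    rw [ENNReal.ofReal_mul (by positivity),
      ← ENNReal.ofReal_rpow_of_nonneg (by positivity) (by positivity),
      ← ENNReal.ofReal_rpow_of_nonneg (by linarith) (by linarith)]
    gcongr
    simp
  have hi : IntegrableOn (deriv f) (Set.Ioc a b) := by
    refine ⟨hm.aestronglyMeasurable, ?_⟩
    rw [hasFiniteIntegral_iff_norm]
    exact h2.trans_lt ENNReal.ofReal_lt_top
  have h3 : ∫ t in Set.Ioc a b, |deriv f t| ≤ (a ^ (-(d:ℝ)) * T) ^ (1 / p) * (b - a) ^ (1 - 1 / p) := by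
    rw [integral_eq_lintegral_of_nonneg_ae (Eventually.of_forall fun _ => abs_nonneg _)
      hm.abs.aestronglyMeasurable]
    exact ENNReal.toReal_le_of_le_ofReal (by positivity) h2
  have h4 : ∀ r ∈ Set.Ioc a b, ∀ t ∈ Set.Ioc a b, |f r - f t| ≤
      (a ^ (-(d:ℝ)) * T) ^ (1 / p) * (b - a) ^ (1 - 1 / p) := by
    have main : ∀ r ∈ Set.Ioc a b, ∀ t ∈ Set.Ioc a b, r ≤ t → |f r - f t| ≤
      (a ^ (-(d:ℝ)) * T) ^ (1 / p) * (b - a) ^ (1 - 1 / p) := by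
      intro r hr t ht hrt
      have hs : Set.Ioc r t ⊆ Set.Ioc a b := Set.Ioc_subset_Ioc hr.1.le ht.2
      have hii : IntervalIntegrable (deriv f) volume r t := by
        rw [intervalIntegrable_iff_integrableOn_Ioc_of_le hrt]
        exact hi.mono_set hs
      have := intervalIntegral.integral_eq_sub_of_hasDerivAt (fun x _ => (hf x).hasDerivAt) hii
      rw [abs_sub_comm, ← this, intervalIntegral.integral_of_le hrt]
      refine abs_integral_le_integral_abs.trans (le_trans ?_ h3)
      exact setIntegral_mono_set hi.abs (Eventually.of_forall fun _ => abs_nonneg _) hs.eventuallyLE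
    intro r hr t ht
    rcases le_total r t with h | h
    · exact main r hr t ht h
    · rw [abs_sub_comm]; exact main t ht r hr h
  have h5 : ∀ r ∈ Set.Ioc a b, ∀ t ∈ Set.Ioc a b, ENNReal.ofReal (|f r - f t| ^ p) ≤
      ENNReal.ofReal (a ^ (-(d:ℝ)) * T * (b - a) ^ (p - 1)) := by
    intro r hr t ht
    apply ENNReal.ofReal_le_ofReal
    refine (Real.rpow_le_rpow (abs_nonneg _) (h4 r hr t ht) (by linarith)).trans (le_of_eq ?_)
    rw [Real.mul_rpow (by positivity) (by positivity), ← Real.rpow_mul (by positivity),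
      ← Real.rpow_mul hba.le]
    have : p ≠ 0 := by linarith
    have e1 : 1 / p * p = 1 := by field_simp
    have e2 : (1 - 1 / p) * p = p - 1 := by field_simp
    rw [e1, e2, Real.rpow_one]
  calc _ ≤ ∫⁻ r in Set.Ioc a b, ∫⁻ t in Set.Ioc a b, ENNReal.ofReal (a ^ (-(d:ℝ)) * T * (b - a) ^ (p - 1)) :=
        setLIntegral_mono' measurableSet_Ioc fun r hr => setLIntegral_mono' measurableSet_Ioc fun t ht => h5 r hr t ht
    _ = _ := by
        rw [setLIntegral_const, setLIntegral_const, Real.volume_Ioc, ← ENNReal.ofReal_mul (by positivity),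
          ← ENNReal.ofReal_mul (by positivity)]
        congr 1
        have : (b - a) ^ (1 + p) = (b - a) ^ (p - 1) * (b - a) * (b - a) := by
          have e : 1 + p = (p - 1) + 1 + 1 := by ring
          rw [e, Real.rpow_add hba, Real.rpow_add hba, Real.rpow_one]
        rw [this]; ring


lemma le_of_rpow_inv_le {x M p : ℝ} (hp : 1 < p) (hx : 0 ≤ x) (hM : x ^ (1 / p) ≤ M) :
    x ≤ M ^ p := by
  have h0 : 0 ≤ x ^ (1 / p) := Real.rpow_nonneg hx _
  have := Real.rpow_le_rpow h0 hM (by linarith : 0 ≤ p)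
  rwa [← Real.rpow_mul hx, one_div, inv_mul_cancel₀ (by linarith), Real.rpow_one] at this

set_option maxHeartbeats 2000000 in
lemma prof_of_mem {d : ℕ} {s p β M : ℝ} (hp : 1 < p) (hs : s ∈ Set.Ioc (0:ℝ) 1) (hM : 0 ≤ M) :
    ∃ A : ℝ, 0 ≤ A ∧ ∀ (u : EuclideanSpace ℝ (Fin (d+1)) → ℝ) (f : ℝ → ℝ),
      MemWspBeta (d+1) s p β u →
      (∫ x, ‖x‖ ^ β * |u x| ^ p) ^ (1 / p) + seminormSP (d+1) s p u ≤ M →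
      (∀ e : EuclideanSpace ℝ (Fin (d+1)), ‖e‖ = 1 → ∀ r : ℝ, 0 ≤ r → f r = u (r • e)) →
      (∃ e : EuclideanSpace ℝ (Fin (d+1)), ‖e‖ = 1 ∧ ∀ r : ℝ, f r = u (r • e)) →
      (∀ x, u x = f ‖x‖) →
      Prof d s p β A f := by
  have hp0 : 0 < p := by linarith
  set S : ENNReal := (volume : Measure (EuclideanSpace ℝ (Fin (d+1)))).toSphere Set.univ with hS
  have hS0 : S ≠ 0 := by
    rw [hS]; exact Measure.measure_univ_ne_zero.2 (Measure.toSphere_ne_zero _)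
  have hSt : S ≠ ⊤ := measure_ne_top _ _
  set V : ENNReal := (volume : Measure (EuclideanSpace ℝ (Fin (d+1)))) (Metric.ball 0 1) with hV
  have hV0 : V ≠ 0 := (Metric.measure_ball_pos _ _ one_pos).ne'
  have hVt : V ≠ ⊤ := measure_ball_lt_top.ne
  have hfr : Module.finrank ℝ (EuclideanSpace ℝ (Fin (d+1))) = d + 1 := by simp
  set T := M ^ p with hT
  have hT0 : 0 ≤ T := by positivity
  set c := S.toReal with hc
  have hc0 : 0 < c := ENNReal.toReal_pos hS0 hSt
  have hSc : S = ENNReal.ofReal c := (ENNReal.ofReal_toReal hSt).symm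
  set v := V.toReal with hv
  have hv0 : 0 < v := ENNReal.toReal_pos hV0 hVt
  have hVv : V = ENNReal.ofReal v := (ENNReal.ofReal_toReal hVt).symm
  have hdiv : ∀ (X Y : ℝ) (D : ENNReal), 0 < X → ENNReal.ofReal X * D ≤ ENNReal.ofReal Y →
      D ≤ ENNReal.ofReal (Y / X) := by
    intro X Y D hX h
    rw [ENNReal.ofReal_div_of_pos hX, ENNReal.le_div_iff_mul_le (Or.inl (by simpa using hX))
      (Or.inl ENNReal.ofReal_ne_top), mul_comm]
    exact h
  set A2 := T * (5 ^ ((d:ℝ) + 1 + s * p) * 16 ^ d * 8) / (c * v) with hA2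
  have hA20 : 0 ≤ A2 := by positivity
  have hpow : ∀ t : ℝ, 0 < t → ∀ y γ : ℝ, 
      ENNReal.ofReal (t ^ d) * ENNReal.ofReal (t ^ γ * y) = ENNReal.ofReal (t ^ ((d:ℝ) + γ) * y) := by
    intro t ht y γ
    rw [← ENNReal.ofReal_mul (by positivity), Real.rpow_add ht, Real.rpow_natCast, mul_assoc]
  refine ⟨T / c + A2, by positivity, fun u f hmem hbd hfe hfe' huf => ?_⟩
  obtain ⟨hum, hrad, hintg, hif⟩ := hmem
  obtain ⟨e, he, hfe1⟩ := hfe'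
  have hfm : Measurable f := by
    have : f = fun r : ℝ => u (r • e) := funext hfe1
    rw [this]; exact hum.comp (by fun_prop)
  have hI1 : 0 ≤ ∫ x, ‖x‖ ^ β * |u x| ^ p :=
    integral_nonneg fun x => mul_nonneg (Real.rpow_nonneg (norm_nonneg _) _) (Real.rpow_nonneg (abs_nonneg _) _)
  have hI1' : 0 ≤ (∫ x, ‖x‖ ^ β * |u x| ^ p) ^ (1 / p) := Real.rpow_nonneg hI1 _
  have hsem0 : 0 ≤ seminormSP (d+1) s p u := by
    unfold seminormSP
    split_ifs
    · exact Real.rpow_nonneg (integral_nonneg fun x => by positivity) _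
    · exact Real.rpow_nonneg (integral_nonneg fun x => by positivity) _
  have hb1 : ∫ x, ‖x‖ ^ β * |u x| ^ p ≤ T := le_of_rpow_inv_le hp hI1 (by linarith)
  have hb2 : seminormSP (d+1) s p u ≤ M := by linarith
  refine ⟨hfm, ?_, ?_⟩
  · have h1 : ∫⁻ x : (EuclideanSpace ℝ (Fin (d+1))), ENNReal.ofReal (‖x‖ ^ β * |f ‖x‖| ^ p) ≤ ENNReal.ofReal T := by
      have : ∀ x : (EuclideanSpace ℝ (Fin (d+1))), ‖x‖ ^ β * |f ‖x‖| ^ p = ‖x‖ ^ β * |u x| ^ p := fun x => by rw [huf x]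
      simp only [this]
      rw [← ofReal_integral_eq_lintegral_ofReal hintg (Eventually.of_forall fun x => by positivity)]
      exact ENNReal.ofReal_le_ofReal hb1
    rw [polar_radial (volume : Measure (EuclideanSpace ℝ (Fin (d+1)))) (fun t => ENNReal.ofReal (t ^ β * |f t| ^ p)) (by fun_prop),
      ← hS, hSc, hfr, Nat.add_sub_cancel] at h1
    have h2 := hdiv _ _ _ hc0 h1
    rw [setLIntegral_congr_fun measurableSet_Ioi (fun t ht => hpow t ht _ _)] at h2
    refine h2.trans (ENNReal.ofReal_le_ofReal ?_)
    linarith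
  · intro a b ha hab hb
    have hba : 0 < b - a := by linarith
    have hTc : 0 ≤ T / c := by positivity
    by_cases hs1 : s = 1
    · subst hs1
      simp only [if_true] at hif
      obtain ⟨hdiff, hdi⟩ := hif
      have hfd : Differentiable ℝ f := by
        have : f = fun r : ℝ => u (r • e) := funext hfe1
        rw [this]; exact hdiff.comp (by fun_prop)
      have hb3 : ∫ x, ‖fderiv ℝ u x‖ ^ p ≤ T := by
        simp only [seminormSP, if_true] at hb2
        exact le_of_rpow_inv_le hp (integral_nonneg fun x => by positivity) hb2
      have h1 : ∫⁻ x : (EuclideanSpace ℝ (Fin (d+1))), ENNReal.ofReal (|deriv f ‖x‖| ^ p) ≤ ENNReal.ofReal T := by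
        refine le_trans ?_ (ENNReal.ofReal_le_ofReal hb3)
        rw [ofReal_integral_eq_lintegral_ofReal hdi (Eventually.of_forall fun x => by positivity)]
        refine lintegral_mono_ae ?_
        have hne : ∀ᵐ x : (EuclideanSpace ℝ (Fin (d+1))), x ≠ 0 := by simp [ae_iff]
        filter_upwards [hne] with x hx
        apply ENNReal.ofReal_le_ofReal
        apply Real.rpow_le_rpow (abs_nonneg _) _ hp0.le
        have hx0 : 0 < ‖x‖ := norm_pos_iff.2 hx
        set τ : (EuclideanSpace ℝ (Fin (d+1))) := ‖x‖⁻¹ • x with hτ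
        have hτ1 : ‖τ‖ = 1 := by simp [hτ, norm_smul, hx0.ne']
        have hxτ : ‖x‖ • τ = x := by simp [hτ, smul_smul, hx0.ne']
        have hd1 : HasDerivAt (fun r : ℝ => u (r • τ)) (fderiv ℝ u x τ) ‖x‖ := by
          have h2 : HasDerivAt (fun r : ℝ => r • τ) τ ‖x‖ := by
            simpa using (hasDerivAt_id ‖x‖).smul_const τ
          have h3 : HasFDerivAt u (fderiv ℝ u x) (‖x‖ • τ) := by
            rw [hxτ]; exact (hdiff x).hasFDerivAt
          exact h3.comp_hasDerivAt ‖x‖ h2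
        have hd2 : HasDerivAt f (fderiv ℝ u x τ) ‖x‖ := by
          refine hd1.congr_of_eventuallyEq ?_
          filter_upwards [lt_mem_nhds hx0] with r hr
          exact hfe τ hτ1 r hr.le
        rw [hd2.deriv]
        have := (fderiv ℝ u x).le_opNorm τ
        rwa [hτ1, mul_one, Real.norm_eq_abs] at this
      have hdm := measurable_deriv f
      rw [polar_radial (volume : Measure (EuclideanSpace ℝ (Fin (d+1)))) (fun t => ENNReal.ofReal (|deriv f t| ^ p)) (by fun_prop),
        ← hS, hSc, hfr, Nat.add_sub_cancel] at h1
      have h2 := hdiv _ _ _ hc0 h1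
      refine (energy_one hp hTc hfd h2 ha hab).trans (ENNReal.ofReal_le_ofReal ?_)
      rw [one_mul]
      gcongr
      linarith
    · simp only [if_neg hs1] at hif
      have hb3 : ∫ q : (EuclideanSpace ℝ (Fin (d+1))) × (EuclideanSpace ℝ (Fin (d+1))), |u q.1 - u q.2| ^ p / ‖q.1 - q.2‖ ^ (((d + 1 : ℕ) : ℝ) + s * p) ≤ T := by
        simp only [seminormSP, if_neg hs1] at hb2
        exact le_of_rpow_inv_le hp (integral_nonneg fun x => by positivity) hb2
      have h1 : ∫⁻ z : (EuclideanSpace ℝ (Fin (d+1))) × (EuclideanSpace ℝ (Fin (d+1))), ENNReal.ofReal (|u z.1 - u z.2| ^ p / ‖z.1 - z.2‖ ^ ((d:ℝ) + 1 + s * p))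
          ∂((volume : Measure (EuclideanSpace ℝ (Fin (d+1)))).prod volume) ≤ ENNReal.ofReal T := by
        refine le_trans ?_ (ENNReal.ofReal_le_ofReal hb3)
        rw [ofReal_integral_eq_lintegral_ofReal hif (Eventually.of_forall fun x => by positivity)]
        rw [Nat.cast_add, Nat.cast_one]
        rfl
      have h2 := energy_frac (volume : Measure (EuclideanSpace ℝ (Fin (d+1)))) huf hfm hfr hp hs.1 h1 ha hab hb
      rw [← hS, ← hV, hSc, hVv, ← ENNReal.ofReal_mul hc0.le, ← ENNReal.ofReal_mul (by positivity)] at h2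
      refine (hdiv _ _ _ (by positivity) h2).trans (ENNReal.ofReal_le_ofReal ?_)
      have e1 : T / (a ^ d * a ^ d * (5 * (b - a)) ^ (-((d:ℝ) + 1 + s * p)) *
          (((b - a) / a / 16) ^ d / 8) * (c * v)) = A2 * a ^ (-(d:ℝ)) * (b - a) ^ (1 + s * p) := by
        have e2 : (b - a) ^ ((d:ℝ) + 1 + s * p) = (b - a) ^ d * (b - a) ^ (1 + s * p) := by
          rw [add_assoc, Real.rpow_add hba, Real.rpow_natCast]
        rw [hA2, Real.rpow_neg (by positivity), Real.rpow_neg ha.le, Real.rpow_natCast,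
          Real.mul_rpow (by norm_num) hba.le, e2, div_pow, div_pow]
        field_simp
      rw [e1]
      gcongr
      linarith

/-- Compactness of the embedding `W^{s,p}_{rad,β}(ℝ^N) ⊂ L^q_α(ℝ^N)`: a sequence that is
bounded in the weighted norm and converges weakly to `0` converges strongly in `L^q_α`. -/
theorem stmt11 (N : ℕ) (hN : 1 ≤ N) (p s α β q : ℝ) (hp : 1 < p)
    (hs : s ∈ Set.Ioc (0 : ℝ) 1) (hs1 : 1 / p < s) (hs2 : s < N / p) (hβ : 0 < β)
    (hα : -(s * p) < α) (hq1 : p < q) (hq2 : q < p * ((N : ℝ) + α) / ((N : ℝ) - s * p))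
    (hexp : α - β + (q - p) * ((1 - (N : ℝ)) / p) < 0)
    (u : ℕ → EuclideanSpace ℝ (Fin N) → ℝ)
    (hmem : ∀ n, MemWspBeta N s p β (u n))
    (hbdd : ∃ M : ℝ, ∀ n,
      (∫ x, ‖x‖ ^ β * |u n x| ^ p) ^ (1 / p) + seminormSP N s p (u n) ≤ M)
    (hweak : ∀ φ : EuclideanSpace ℝ (Fin N) → ℝ, Continuous φ → HasCompactSupport φ →
      Tendsto (fun n => ∫ x, u n x * φ x) atTop (nhds 0)) :
    Tendsto (fun n => ∫⁻ x, ENNReal.ofReal (‖x‖ ^ α * |u n x| ^ q)) atTop (nhds 0) := by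
  obtain ⟨d, rfl⟩ : ∃ d, N = d + 1 := ⟨N - 1, (Nat.sub_add_cancel hN).symm⟩
  have hp0 : 0 < p := by linarith
  obtain ⟨M, hM⟩ := hbdd
  set e : (EuclideanSpace ℝ (Fin (d+1))) := EuclideanSpace.single (0 : Fin (d+1)) (1:ℝ) with he
  have he1 : ‖e‖ = 1 := by simp [he]
  set f : ℕ → ℝ → ℝ := fun n r => u n (r • e) with hf
  have huf : ∀ n x, u n x = f n ‖x‖ := by
    intro n x
    apply (hmem n).2.1
    simp [norm_smul, he1]
  obtain ⟨A, hA, hprof⟩ := prof_of_mem (d := d) (s := s) (p := p) (β := β) (M := |M|) hp hs (abs_nonneg M)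
  have H : ∀ n, Prof d s p β A (f n) := by
    intro n
    refine hprof (u n) (f n) (hmem n) ((hM n).trans (le_abs_self M)) ?_ ⟨e, he1, fun r => rfl⟩ (huf n)
    intro e' he' r hr
    apply (hmem n).2.1
    simp [norm_smul, he1, he']
  have hfr : Module.finrank ℝ (EuclideanSpace ℝ (Fin (d+1))) = d + 1 := by simp
  have hw : ∀ r δ, 0 < r → 0 < δ →
      Tendsto (fun n => ∫ t in Set.Ioc r (r + δ), f n t * bump r δ t) atTop (nhds 0) := by
    intro r δ hr hδ
    have h1 := hweak (fun x => bump r δ ‖x‖ / (max ‖x‖ r) ^ d) ?_ ?_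
    · have h2 : ∀ n, ∫ x, u n x * (bump r δ ‖x‖ / (max ‖x‖ r) ^ d) =
          ((d + 1 : ℕ) * (volume : Measure (EuclideanSpace ℝ (Fin (d+1)))).real (Metric.ball 0 1)) *
            ∫ t in Set.Ioc r (r + δ), f n t * bump r δ t := by
        intro n
        simp only [huf n]
        rw [integral_fun_norm_addHaar (volume : Measure (EuclideanSpace ℝ (Fin (d+1))))
          (fun t => f n t * (bump r δ t / (max t r) ^ d)), hfr, Nat.add_sub_cancel]
        rw [nsmul_eq_mul, smul_eq_mul, ← mul_assoc]
        congr 1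
        rw [setIntegral_eq_of_subset_of_forall_sdiff_eq_zero measurableSet_Ioi
          (s := Set.Ioc r (r + δ)) (fun t ht => hr.trans ht.1)]
        · refine setIntegral_congr_fun measurableSet_Ioc fun t ht => ?_
          have ht0 : 0 < t := hr.trans ht.1
          simp only [smul_eq_mul]
          rw [max_eq_left ht.1.le]
          field_simp
        · intro t ht
          rw [bump_zero ht.2 hδ]; simp
      simp only [h2] at h1
      have hk : (((d + 1 : ℕ) : ℝ) * (volume : Measure (EuclideanSpace ℝ (Fin (d+1)))).real (Metric.ball 0 1)) ≠ 0 := by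
        apply mul_ne_zero
        · positivity
        · rw [measureReal_def]
          exact (ENNReal.toReal_pos (Metric.measure_ball_pos _ _ one_pos).ne' measure_ball_lt_top.ne).ne'
      have h3 := h1.const_mul (((d + 1 : ℕ) : ℝ) * (volume : Measure (EuclideanSpace ℝ (Fin (d+1)))).real (Metric.ball 0 1))⁻¹
      rw [mul_zero] at h3
      refine h3.congr fun n => ?_
      rw [← mul_assoc, inv_mul_cancel₀ hk, one_mul]
    · apply Continuous.div
      · exact (bump_cont r δ).comp continuous_norm
      · fun_prop
      · intro x
        have : 0 < max ‖x‖ r := lt_max_of_lt_right hr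
        positivity
    · refine HasCompactSupport.intro (isCompact_closedBall (0:(EuclideanSpace ℝ (Fin (d+1)))) (r + δ)) fun x hx => ?_
      rw [mem_closedBall_zero_iff, not_le] at hx
      rw [bump_zero (fun h => absurd h.2 (not_le.2 hx)) hδ, zero_div]
  have hN' : ((d + 1 : ℕ) : ℝ) = d + 1 := by push_cast; ring
  rw [hN'] at hs2 hq2 hexp
  have hsp : s * p < d + 1 := by rwa [lt_div_iff₀ hp0] at hs2
  have hgam : gam d s p = ((d:ℝ) + 1 - s * p) / p := by
    unfold gam; field_simp; ring
  have hg : 0 < gam d s p := by rw [hgam]; apply div_pos _ hp0; linarith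
  have hx1 : -1 < (d:ℝ) + α - gam d s p * q := by
    rw [lt_div_iff₀ (by linarith)] at hq2
    have : gam d s p * q < (d:ℝ) + 1 + α := by
      rw [hgam, div_mul_eq_mul_div, div_lt_iff₀ hp0]
      linarith
    linarith
  have hx2 : α - β - (q - p) * ((d:ℝ) / p) < 0 := by
    have e1 : (1 - ((d:ℝ) + 1)) / p = -((d:ℝ) / p) := by ring
    rw [e1] at hexp
    linarith
  have key := final1d hp hβ hA hs1 hg hq1 hx1 hx2 H hw
  have h4 : ∀ n, ∫⁻ x, ENNReal.ofReal (‖x‖ ^ α * |u n x| ^ q) =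
      (volume : Measure (EuclideanSpace ℝ (Fin (d+1)))).toSphere Set.univ *
        ∫⁻ t in Set.Ioi (0:ℝ), ENNReal.ofReal (t ^ ((d:ℝ) + α) * |f n t| ^ q) := by
    intro n
    have hfm := (H n).meas
    simp only [huf n]
    rw [polar_radial (volume : Measure (EuclideanSpace ℝ (Fin (d+1)))) (fun t => ENNReal.ofReal (t ^ α * |f n t| ^ q)) (by fun_prop),
      hfr, Nat.add_sub_cancel]
    congr 1
    refine setLIntegral_congr_fun measurableSet_Ioi fun t ht => ?_
    have ht : 0 < t := ht
    rw [← ENNReal.ofReal_mul (by positivity), Real.rpow_add ht, Real.rpow_natCast, mul_assoc]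
  simp only [h4]
  have := ENNReal.Tendsto.const_mul (a := (volume : Measure (EuclideanSpace ℝ (Fin (d+1)))).toSphere Set.univ) key
    (Or.inr (measure_ne_top _ _))
  rwa [mul_zero] at this
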